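/- Let z1, z2, z3 be the three complex roots of the cubic X³ − X − 1. Then the product over all ordered pairs (i,j) with i ≠ j of (X − zi/zj) equals X⁶ + 3X⁵ + 5X⁴ + 5X³ + 5X² + 3X + 1; this degree-6 polynomial is irreducible over ℚ; and the Galois group of the splitting field of X³ − X − 1 over ℚ has order 6 (it is the full symmetric group S3 on the three roots). -/

import Mathlib

open Polynomial

theorem cubic_vieta {a b c : ℂ} (ha : a ^ 3 - a - 1 = 0) (hb : b ^ 3 - b - 1 = 0)
    (hc : c ^ 3 - c - 1 = 0) (hab : a ≠ b) (hac : a ≠ c) (hbc : b ≠ c) :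
    a + b + c = 0 ∧ a * b + a * c + b * c = -1 ∧ a * b * c = 1 := by
  have h1 : a ^ 2 + a * b + b ^ 2 = 1 := by
    apply mul_left_cancel₀ (sub_ne_zero.2 hab)
    linear_combination ha - hb
  have h2 : a ^ 2 + a * c + c ^ 2 = 1 := by
    apply mul_left_cancel₀ (sub_ne_zero.2 hac)
    linear_combination ha - hc
  have h3 : a + b + c = 0 := by
    apply mul_left_cancel₀ (sub_ne_zero.2 hbc)
    linear_combination h1 - h2
  obtain rfl : c = -(a + b) := by linear_combination h3
  refine ⟨h3, by linear_combination -h1, by linear_combination -a * h1 + ha⟩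

theorem cubic_pair {a b c : ℂ} (h3 : a + b + c = 0) (he : a * b * c = 1)
    (hc : c ^ 3 - c - 1 = 0) :
    (X - C (a / b)) * (X - C (b / a)) = X ^ 2 + X + 1 - C c * X := by
  have ha : a ≠ 0 := by rintro rfl; simp at he
  have hb : b ≠ 0 := by rintro rfl; simp at he
  have hp : C (a / b) * C (b / a) = (1 : ℂ[X]) := by
    rw [← C_mul, ← C_1]; congr 1; field_simp
  have hs : C (a / b) + C (b / a) = (C c - 1 : ℂ[X]) := by
    rw [← C_add, ← C_1, ← C_sub]; congr 1
    field_simp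
    obtain rfl : c = -(a + b) := by linear_combination h3
    apply mul_left_cancel₀ (show (-(a + b)) ≠ 0 by rintro h; simp [h] at he)
    grind
  linear_combination hp - X * hs

theorem cubic_prod (z : Fin 3 → ℂ)
    (hroot : ∀ i, (z i) ^ 3 - z i - 1 = 0)
    (hinj : Function.Injective z) :
    (∏ ij ∈ Finset.univ.offDiag, (X - C (z ij.1 / z ij.2)) =
      (X ^ 6 + 3 * X ^ 5 + 5 * X ^ 4 + 5 * X ^ 3 + 5 * X ^ 2 + 3 * X + 1 : Polynomial ℂ)) := by
  obtain ⟨e1, e2, e3⟩ := cubic_vieta (hroot 0) (hroot 1) (hroot 2)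
    (hinj.ne (by decide)) (hinj.ne (by decide)) (hinj.ne (by decide))
  have hd : (Finset.univ.offDiag : Finset (Fin 3 × Fin 3)) =
      {(0, 1), (1, 0), (0, 2), (2, 0), (1, 2), (2, 1)} := by decide
  rw [hd]
  rw [Finset.prod_insert (by decide), Finset.prod_insert (by decide),
    Finset.prod_insert (by decide), Finset.prod_insert (by decide),
    Finset.prod_insert (by decide), Finset.prod_singleton]
  have p1 := cubic_pair e1 e3 (hroot 2)
  have p2 := cubic_pair (a := z 0) (b := z 2) (c := z 1) (by linear_combination e1)
    (by linear_combination e3) (hroot 1)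
  have p3 := cubic_pair (a := z 1) (b := z 2) (c := z 0) (by linear_combination e1)
    (by linear_combination e3) (hroot 0)
  simp only
  have c1 : C (z 0) + C (z 1) + C (z 2) = (0 : ℂ[X]) := by
    rw [← C_add, ← C_add, e1, C_0]
  have c2 : C (z 0) * C (z 1) + C (z 0) * C (z 2) + C (z 1) * C (z 2) = (-1 : ℂ[X]) := by
    simp only [← C_add, ← C_mul]; rw [e2]; simp
  have c3 : C (z 0) * C (z 1) * C (z 2) = (1 : ℂ[X]) := by
    simp only [← C_mul]; rw [e3]; simp
  calc _ = ((X - C (z 0 / z 1)) * (X - C (z 1 / z 0))) *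
        ((X - C (z 0 / z 2)) * (X - C (z 2 / z 0))) *
        ((X - C (z 1 / z 2)) * (X - C (z 2 / z 1))) := by ring
    _ = _ := by
      rw [p1, p2, p3]
      linear_combination (-(X ^ 2 + X + 1) ^ 2 * X) * c1 + ((X ^ 2 + X + 1) * X ^ 2) * c2
        - X ^ 3 * c3

theorem cubic_natDegree : (X ^ 3 - X - 1 : ℚ[X]).natDegree = 3 := by compute_degree!

theorem cubic_real_unique {x y : ℝ} (hx : x ^ 3 - x - 1 = 0) (hy : y ^ 3 - y - 1 = 0) :
    x = y := by
  have key : ∀ t : ℝ, t ^ 3 - t - 1 = 0 → 1 < t := by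
    intro t ht
    by_contra h
    push Not at h
    rcases le_total t (-1) with h1 | h1
    · nlinarith [mul_nonneg (sub_nonneg.2 h) (sq_nonneg (t + 1)), sq_nonneg (t + 1),
        sq_nonneg t]
    · rcases le_total t 0 with h2 | h2
      · nlinarith [mul_nonneg (neg_nonneg.2 h2) (sq_nonneg t), sq_nonneg t]
      · nlinarith [mul_nonneg h2 (mul_nonneg (sub_nonneg.2 h) (by linarith : 0 ≤ t + 1))]
  have h1 := key x hx
  have h2 := key y hy
  by_contra hne
  have : x ^ 2 + x * y + y ^ 2 = 1 := by
    apply mul_left_cancel₀ (sub_ne_zero.2 hne)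
    linear_combination hx - hy
  nlinarith

theorem cubic_rootSet (z : Fin 3 → ℂ)
    (hroot : ∀ i, (z i) ^ 3 - z i - 1 = 0)
    (hinj : Function.Injective z) : (X ^ 3 - X - 1 : ℚ[X]).rootSet ℂ = Set.range z := by
  obtain ⟨e1, e2, e3⟩ := cubic_vieta (hroot 0) (hroot 1) (hroot 2)
    (hinj.ne (by decide)) (hinj.ne (by decide)) (hinj.ne (by decide))
  have h0 : (X ^ 3 - X - 1 : ℚ[X]) ≠ 0 := by
    intro h; have := cubic_natDegree; rw [h] at this; simp at this
  ext t
  rw [mem_rootSet_of_ne h0]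
  simp only [map_sub, map_pow, aeval_X, map_one, Set.mem_range]
  constructor
  · intro h
    have : (t - z 0) * ((t - z 1) * (t - z 2)) = 0 := by
      linear_combination h - t ^ 2 * e1 + t * e2 - e3
    rcases mul_eq_zero.1 this with h | h
    · exact ⟨0, (sub_eq_zero.1 h).symm⟩
    rcases mul_eq_zero.1 h with h | h
    · exact ⟨1, (sub_eq_zero.1 h).symm⟩
    · exact ⟨2, (sub_eq_zero.1 h).symm⟩
  · rintro ⟨i, rfl⟩
    exact hroot i

theorem cubic_gal (z : Fin 3 → ℂ)
    (hroot : ∀ i, (z i) ^ 3 - z i - 1 = 0)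
    (hinj : Function.Injective z) :
    IsGalois ℚ (IntermediateField.adjoin ℚ (Set.range z)) ∧
    FiniteDimensional ℚ (IntermediateField.adjoin ℚ (Set.range z)) ∧
    Nonempty (((IntermediateField.adjoin ℚ (Set.range z)) ≃ₐ[ℚ]
      (IntermediateField.adjoin ℚ (Set.range z))) ≃* Equiv.Perm (Fin 3)) := by
  have hirr : Irreducible (X ^ 3 - X - 1 : ℚ[X]) :=
    X_pow_sub_X_sub_one_irreducible_rat (by norm_num)
  have hrs := cubic_rootSet z hroot hinj
  have hdeg := cubic_natDegree
  have h0 := hirr.ne_zero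
  generalize hp : (X ^ 3 - X - 1 : ℚ[X]) = p at *
  have hs : p.IsSplittingField ℚ (IntermediateField.adjoin ℚ (Set.range z)) := by
    rw [← hrs]
    exact IntermediateField.adjoin_rootSet_isSplittingField (IsAlgClosed.splits _)
  let e : Fin 3 ≃ p.rootSet ℂ := (Equiv.ofInjective z hinj).trans (Equiv.setCongr hrs.symm)
  have hcard : Fintype.card (p.rootSet ℂ) = 3 := by
    rw [← Fintype.card_congr e]; simp
  have hreal : Fintype.card (p.rootSet ℝ) ≤ 1 := by
    rw [Fintype.card_le_one_iff]
    rintro ⟨x, hx⟩ ⟨y, hy⟩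
    rw [mem_rootSet_of_ne h0, ← hp] at hx hy
    simp only [map_sub, map_pow, aeval_X, map_one] at hx hy
    exact Subtype.ext (cubic_real_unique hx hy)
  have hbij := Gal.galActionHom_bijective_of_prime_degree' hirr
    (by rw [hdeg]; norm_num) (by omega) (by omega)
  refine ⟨IsGalois.of_separable_splitting_field hirr.separable,
    IsSplittingField.finiteDimensional _ p, ⟨?_⟩⟩
  exact ((IsSplittingField.algEquiv _ p).autCongr.trans
    (MulEquiv.ofBijective _ hbij)).trans e.symm.permCongrHom

theorem sextic_irreducible (z : Fin 3 → ℂ)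
    (hroot : ∀ i, (z i) ^ 3 - z i - 1 = 0)
    (hinj : Function.Injective z)
    (hK : Module.finrank ℚ (IntermediateField.adjoin ℚ (Set.range z)) = 6) :
    Irreducible
      (X ^ 6 + 3 * X ^ 5 + 5 * X ^ 4 + 5 * X ^ 3 + 5 * X ^ 2 + 3 * X + 1 : Polynomial ℚ) := by
  obtain ⟨e1, e2, e3⟩ := cubic_vieta (hroot 0) (hroot 1) (hroot 2)
    (hinj.ne (by decide)) (hinj.ne (by decide)) (hinj.ne (by decide))
  have hz0 : z 0 ≠ 0 := by intro h; simp [h] at e3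
  have hz1 : z 1 ≠ 0 := by intro h; simp [h] at e3
  have hz2 : z 2 ≠ 0 := by intro h; simp [h] at e3
  have h01 : z 0 ≠ z 1 := hinj.ne (by decide)
  obtain ⟨w, hw⟩ : ∃ w, w = z 0 / z 1 := ⟨_, rfl⟩
  have hwz : z 0 = w * z 1 := by rw [hw]; field_simp
  have hden : w ^ 3 - w ≠ 0 := by
    have : w ^ 3 - w = w * ((w - 1) * (w + 1)) := by ring
    rw [this]
    refine mul_ne_zero ?_ (mul_ne_zero ?_ ?_)
    · rintro rfl; simp [hz0] at hwz
    · intro h; apply h01; rw [hwz]; linear_combination z 1 * h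
    · intro h; apply hz2; linear_combination e1 - hwz - z 1 * h
  have hz1w : z 1 = (1 - w ^ 3) / (w ^ 3 - w) := by
    rw [eq_div_iff hden]
    have h0 := hroot 0
    rw [hwz] at h0
    linear_combination h0 - w ^ 3 * hroot 1
  have hle : IntermediateField.adjoin ℚ (Set.range z) ≤ IntermediateField.adjoin ℚ {w} := by
    rw [IntermediateField.adjoin_le_iff]
    have mw : w ∈ IntermediateField.adjoin ℚ {w} :=
      IntermediateField.mem_adjoin_simple_self ℚ w
    have m1 : z 1 ∈ IntermediateField.adjoin ℚ {w} := by
      rw [hz1w]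
      exact div_mem (sub_mem (one_mem _) (pow_mem mw 3)) (sub_mem (pow_mem mw 3) mw)
    have m0 : z 0 ∈ IntermediateField.adjoin ℚ {w} := by
      rw [hwz]; exact mul_mem mw m1
    have m2 : z 2 ∈ IntermediateField.adjoin ℚ {w} := by
      rw [show z 2 = -(z 0 + z 1) by linear_combination e1]
      exact neg_mem (add_mem m0 m1)
    rintro _ ⟨i, rfl⟩
    fin_cases i
    · exact m0
    · exact m1
    · exact m2
  have hge : IntermediateField.adjoin ℚ {w} ≤ IntermediateField.adjoin ℚ (Set.range z) := by
    rw [IntermediateField.adjoin_le_iff, Set.singleton_subset_iff, hw]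
    exact div_mem (IntermediateField.subset_adjoin _ _ ⟨0, rfl⟩)
      (IntermediateField.subset_adjoin _ _ ⟨1, rfl⟩)
  rw [le_antisymm hle hge] at hK
  have hev := congrArg (eval w) (cubic_prod z hroot hinj)
  rw [eval_prod, Finset.prod_eq_zero (i := ((0 : Fin 3), (1 : Fin 3))) (by decide)
    (by simp [hw])] at hev
  have hnd : (X ^ 6 + 3 * X ^ 5 + 5 * X ^ 4 + 5 * X ^ 3 + 5 * X ^ 2 + 3 * X + 1 :
      ℚ[X]).natDegree = 6 := by compute_degree!
  have hmon : (X ^ 6 + 3 * X ^ 5 + 5 * X ^ 4 + 5 * X ^ 3 + 5 * X ^ 2 + 3 * X + 1 :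
      ℚ[X]).Monic := by monicity!
  have haev : aeval w (X ^ 6 + 3 * X ^ 5 + 5 * X ^ 4 + 5 * X ^ 3 + 5 * X ^ 2 + 3 * X + 1 :
      ℚ[X]) = 0 := by
    have a3 : aeval w (3 : ℚ[X]) = 3 := map_ofNat (aeval w) 3
    have a5 : aeval w (5 : ℚ[X]) = 5 := map_ofNat (aeval w) 5
    simp [a3, a5] at hev ⊢
    exact hev.symm
  generalize (X ^ 6 + 3 * X ^ 5 + 5 * X ^ 4 + 5 * X ^ 3 + 5 * X ^ 2 + 3 * X + 1 :
      ℚ[X]) = f at *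
  have hint : IsIntegral ℚ w := ⟨f, hmon, haev⟩
  rw [IntermediateField.adjoin.finrank hint] at hK
  rw [eq_of_monic_of_dvd_of_natDegree_le (minpoly.monic hint) hmon (minpoly.dvd ℚ w haev)
    (by omega)]
  exact minpoly.irreducible hint


/-- Let `z 0, z 1, z 2` be the three (distinct) complex roots of
`X³ − X − 1`.  Then `∏_{i ≠ j} (X − z i / z j) = X⁶ + 3X⁵ + 5X⁴ + 5X³ + 5X² + 3X + 1`;
this degree-6 polynomial is irreducible over `ℚ`; and the Galois group of the splitting
field of `X³ − X − 1` over `ℚ` has order `6` (it is the full symmetric group `S3` on the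
three roots). -/
theorem quotients_of_roots_of_cubic
    (z : Fin 3 → ℂ)
    (hroot : ∀ i, (z i) ^ 3 - z i - 1 = 0)
    (hinj : Function.Injective z) :
    (∏ ij ∈ Finset.univ.offDiag, (X - C (z ij.1 / z ij.2)) =
      (X ^ 6 + 3 * X ^ 5 + 5 * X ^ 4 + 5 * X ^ 3 + 5 * X ^ 2 + 3 * X + 1 : Polynomial ℂ)) ∧
    Irreducible
      (X ^ 6 + 3 * X ^ 5 + 5 * X ^ 4 + 5 * X ^ 3 + 5 * X ^ 2 + 3 * X + 1 : Polynomial ℚ) ∧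
    Nat.card ((IntermediateField.adjoin ℚ (Set.range z)) ≃ₐ[ℚ]
      (IntermediateField.adjoin ℚ (Set.range z))) = 6 ∧
    Nonempty (((IntermediateField.adjoin ℚ (Set.range z)) ≃ₐ[ℚ]
      (IntermediateField.adjoin ℚ (Set.range z))) ≃* Equiv.Perm (Fin 3)) := by
  obtain ⟨hG, hF, ⟨e⟩⟩ := cubic_gal z hroot hinj
  have hcard : Nat.card ((IntermediateField.adjoin ℚ (Set.range z)) ≃ₐ[ℚ]
      (IntermediateField.adjoin ℚ (Set.range z))) = 6 := by
    rw [Nat.card_congr e.toEquiv, Nat.card_perm, Nat.card_fin]; rfl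
  refine ⟨cubic_prod z hroot hinj, sextic_irreducible z hroot hinj ?_, hcard, ⟨e⟩⟩
  rw [← IsGalois.card_aut_eq_finrank, hcard]
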